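/- Let Ω be a finite probability space, let k, l ≥ 1, and let R : Ω → (Fin k → (Fin l → Bool)) be a random variable whose j-th block R_j takes values in {0,1}^l. Let V : Ω → 𝒱 be a random variable on a finite nonempty set 𝒱, let J : Ω → Fin k be an arbitrary random index, and let g : 𝒱 × Fin k → (Fin l → Bool) be any function. Suppose that for every j ∈ Fin k the block R_j is uniformly distributed on {0,1}^l and is independent of V. Then P[ R_J = g(V, J) ] ≤ k² · 2^{−l}. -/

import Mathlib

open Finset Real

/-- Probability of an event `E` under the weight function `p` on a finite sample space. -/
noncomputable def pr {Ω : Type*} [Fintype Ω] (p : Ω → ℝ) (E : Set Ω) : ℝ :=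
  ∑ ω, E.indicator p ω

/-- `P[X = x]`. -/
noncomputable def prEq {Ω 𝒳 : Type*} [Fintype Ω] (p : Ω → ℝ) (X : Ω → 𝒳) (x : 𝒳) : ℝ :=
  pr p {ω | X ω = x}

/-- `P[X = x | Y = y]`, taken to be `0` when `P[Y = y] = 0`. -/
noncomputable def condProb {Ω 𝒳 𝒴 : Type*} [Fintype Ω]
    (p : Ω → ℝ) (X : Ω → 𝒳) (x : 𝒳) (Y : Ω → 𝒴) (y : 𝒴) : ℝ :=
  if prEq p Y y = 0 then 0 else pr p {ω | X ω = x ∧ Y ω = y} / prEq p Y y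

/-- Average min-entropy `H̃∞(X | Y)`. -/
noncomputable def avgMinEntropy {Ω 𝒳 𝒴 : Type*} [Fintype Ω]
    [Fintype 𝒳] [Nonempty 𝒳] [Fintype 𝒴]
    (p : Ω → ℝ) (X : Ω → 𝒳) (Y : Ω → 𝒴) : ℝ :=
  - Real.logb 2 (∑ y : 𝒴, prEq p Y y *
      (Finset.univ.sup' Finset.univ_nonempty fun x : 𝒳 => condProb p X x Y y))

/-- Min-entropy `H∞(X)`. -/
noncomputable def minEntropy {Ω 𝒳 : Type*} [Fintype Ω] [Fintype 𝒳] [Nonempty 𝒳]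
    (p : Ω → ℝ) (X : Ω → 𝒳) : ℝ :=
  - Real.logb 2 (Finset.univ.sup' Finset.univ_nonempty fun x : 𝒳 => prEq p X x)

/-!
Condition on `V` and take a union bound over the value of `J`. For a fixed index `j` and value `w`,
independence gives `P[R_j = g (w, j), V = w] = 2⁻ˡ * P[V = w]`, and summing over `w` shows that
`g (V, j)` predicts `R_j` with probability `2⁻ˡ`. Since `J` takes one of `k` values, the probability
in question is at most `k * 2⁻ˡ`.
-/

section FiniteProbability

variable {Ω ι 𝒳 𝒴 : Type*} [Fintype Ω] {p : Ω → ℝ}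

lemma pr_nonneg (hp : ∀ ω, 0 ≤ p ω) (E : Set Ω) : 0 ≤ pr p E :=
  Finset.sum_nonneg fun ω _ => Set.indicator_nonneg (fun ω _ => hp ω) ω

lemma pr_mono (hp : ∀ ω, 0 ≤ p ω) {E F : Set Ω} (h : E ⊆ F) : pr p E ≤ pr p F :=
  Finset.sum_le_sum fun ω _ => Set.indicator_le_indicator_of_subset h hp ω

lemma pr_univ (p : Ω → ℝ) : pr p Set.univ = ∑ ω, p ω := by
  simp [pr]

lemma pr_eq_sum_pr_inter_fiber (p : Ω → ℝ) {Y : Ω → 𝒴} {s : Finset 𝒴} (hY : ∀ ω, Y ω ∈ s)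
    (E : 𝒴 → Set Ω) :
    pr p {ω | ω ∈ E (Y ω)} = ∑ y ∈ s, pr p {ω | ω ∈ E y ∧ Y ω = y} := by
  classical
  unfold pr
  rw [Finset.sum_comm]
  refine Finset.sum_congr rfl fun ω _ => ?_
  rw [Finset.sum_eq_single_of_mem (Y ω) (hY ω)]
  · simp [Set.indicator_apply]
  · intro y _ hy
    simp [hy.symm]

lemma sum_prEq (p : Ω → ℝ) {Y : Ω → 𝒴} {s : Finset 𝒴} (hY : ∀ ω, Y ω ∈ s) :
    ∑ y ∈ s, prEq p Y y = ∑ ω, p ω := by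
  simpa [prEq, pr_univ] using (pr_eq_sum_pr_inter_fiber p hY fun _ => Set.univ).symm

lemma pr_mem_random_index_le_sum [Fintype ι] (hp : ∀ ω, 0 ≤ p ω) (J : Ω → ι) (E : ι → Set Ω) :
    pr p {ω | ω ∈ E (J ω)} ≤ ∑ j, pr p (E j) := by
  rw [pr_eq_sum_pr_inter_fiber p fun ω => Finset.mem_univ (J ω)]
  exact Finset.sum_le_sum fun j _ => pr_mono hp fun ω hω => hω.1

lemma pr_eq_comp_le_of_indep (hp : ∀ ω, 0 ≤ p ω) (hsum : ∑ ω, p ω = 1) {X : Ω → 𝒳} {Y : Ω → 𝒴}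
    {c : ℝ} (hX : ∀ x, prEq p X x ≤ c)
    (hindep : ∀ x y, pr p {ω | X ω = x ∧ Y ω = y} = prEq p X x * prEq p Y y) (f : 𝒴 → 𝒳) :
    pr p {ω | X ω = f (Y ω)} ≤ c := by
  classical
  have hY : ∀ ω, Y ω ∈ Finset.univ.image Y := fun ω =>
    Finset.mem_image_of_mem Y (Finset.mem_univ ω)
  calc pr p {ω | X ω = f (Y ω)}
      = ∑ y ∈ Finset.univ.image Y, pr p {ω | X ω = f y ∧ Y ω = y} :=
        pr_eq_sum_pr_inter_fiber p hY fun y => {ω | X ω = f y}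
    _ = ∑ y ∈ Finset.univ.image Y, prEq p X (f y) * prEq p Y y := by simp only [hindep]
    _ ≤ ∑ y ∈ Finset.univ.image Y, c * prEq p Y y :=
        Finset.sum_le_sum fun y _ => mul_le_mul_of_nonneg_right (hX (f y)) (pr_nonneg hp _)
    _ = c := by rw [← Finset.mul_sum, sum_prEq p hY, hsum, mul_one]

end FiniteProbability

theorem stmt_14_general {Ω ι 𝒱 : Type*} {𝒳 : ι → Type*} [Fintype Ω] [Fintype ι]
    {p : Ω → ℝ} (hp : ∀ ω, 0 ≤ p ω) (hsum : ∑ ω, p ω = 1)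
    (R : Ω → ∀ j, 𝒳 j) (V : Ω → 𝒱) (J : Ω → ι) (g : 𝒱 → ∀ j, 𝒳 j) {c : ℝ}
    (hR : ∀ j x, prEq p (fun ω => R ω j) x ≤ c)
    (hindep : ∀ j x w,
      pr p {ω | R ω j = x ∧ V ω = w} = prEq p (fun ω => R ω j) x * prEq p V w) :
    pr p {ω | R ω (J ω) = g (V ω) (J ω)} ≤ Fintype.card ι * c :=
  calc pr p {ω | R ω (J ω) = g (V ω) (J ω)}
      ≤ ∑ j, pr p {ω | R ω j = g (V ω) j} :=
        pr_mem_random_index_le_sum hp J fun j => {ω | R ω j = g (V ω) j}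
    _ ≤ ∑ _j : ι, c := Finset.sum_le_sum fun j _ =>
        pr_eq_comp_le_of_indep hp hsum (hR j) (hindep j) fun w => g w j
    _ = Fintype.card ι * c := by
        rw [Finset.sum_const, Finset.card_univ, nsmul_eq_mul]

theorem stmt_14 {Ω 𝒱 : Type*} [Fintype Ω] [Fintype 𝒱] [Nonempty 𝒱]
    (k l : ℕ) (hk : 1 ≤ k) (hl : 1 ≤ l)
    (p : Ω → ℝ) (hp : ∀ ω, 0 ≤ p ω) (hsum : ∑ ω, p ω = 1)
    (R : Ω → (Fin k → (Fin l → Bool))) (V : Ω → 𝒱) (J : Ω → Fin k)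
    (g : 𝒱 × Fin k → (Fin l → Bool))
    (hunif : ∀ (j : Fin k) (v : Fin l → Bool),
      prEq p (fun ω => R ω j) v = (2 : ℝ) ^ (-(l : ℝ)))
    (hindep : ∀ (j : Fin k) (v : Fin l → Bool) (w : 𝒱),
      pr p {ω | R ω j = v ∧ V ω = w} =
        prEq p (fun ω => R ω j) v * prEq p V w) :
    pr p {ω | R ω (J ω) = g (V ω, J ω)} ≤ (k : ℝ) ^ 2 * (2 : ℝ) ^ (-(l : ℝ)) := by
  have hk_sq : (Fintype.card (Fin k) : ℝ) ≤ (k : ℝ) ^ 2 := by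
    exact_mod_cast (Fintype.card_fin k).trans_le (Nat.le_self_pow two_ne_zero k)
  exact (stmt_14_general hp hsum R V J (fun w j => g (w, j)) (fun j v => (hunif j v).le)
    hindep).trans (by gcongr)
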